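/- Let P be a PPIP. The map f(p) = I_p := {x ∈ P : x ≤ p} is a bijection from P onto the set of ∨-irreducible elements of the modular semilattice Csub(P), and f preserves and reflects all structure: (a) p ≤ q in P iff I_p ⊆ I_q; (b) p ⌣ q in P iff the join I_p ∨ I_q does not exist in Csub(P); (c) C(p,q,r) in P iff I_p, I_q, I_r are pairwise incomparable and the joins I_p ∨ I_q, I_q ∨ I_r, I_r ∨ I_p all exist in Csub(P) and are equal. -/

import Mathlib

/-- The join of `a` and `b` exists (there is a least upper bound of the pair). -/
def JoinExists {α : Type*} [Preorder α] (a b : α) : Prop :=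
  ∃ j, IsLUB ({a, b} : Set α) j

/-- `a` and `b` are incomparable. -/
def Incomp {α : Type*} [Preorder α] (a b : α) : Prop :=
  ¬ a ≤ b ∧ ¬ b ≤ a

/-- A collinear triple: pairwise incomparable elements whose pairwise joins all exist
and coincide. -/
def Collinear3 {α : Type*} [Preorder α] (x y z : α) : Prop :=
  Incomp x y ∧ Incomp y z ∧ Incomp z x ∧
  ∃ j, IsLUB ({x, y} : Set α) j ∧ IsLUB ({y, z} : Set α) j ∧ IsLUB ({z, x} : Set α) j

/-- `l` is ∨-irreducible: `l` is not the minimum element, and whenever `l` is the join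
of `a` and `b`, `l = a` or `l = b`. -/
def JoinIrred {α : Type*} [Preorder α] (l : α) : Prop :=
  (¬ ∀ x, l ≤ x) ∧ ∀ a b, IsLUB ({a, b} : Set α) l → l = a ∨ l = b

/-- A modular semilattice: (existing joins witness that) every principal ideal is a
(modular) lattice, the modular law holds in every principal ideal, and the join of any
three elements exists whenever the three pairwise joins exist. -/
def ModularSemilattice (α : Type*) [SemilatticeInf α] : Prop :=
  (∀ a b : α, (∃ u, a ≤ u ∧ b ≤ u) → JoinExists a b) ∧
  (∀ x a b c : α, a ≤ x → b ≤ x → c ≤ x → a ≤ c →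
    ∀ j, IsLUB ({a, b} : Set α) j → IsLUB ({a, b ⊓ c} : Set α) (j ⊓ c)) ∧
  (∀ x y z : α, JoinExists x y → JoinExists y z → JoinExists z x →
    ∃ j, IsLUB ({x, y, z} : Set α) j)
/-- A PPIP: a poset (given by `le`) with a symmetric inconsistency relation `ic` and a
symmetric collinearity relation `C` satisfying (IC1), (IC2), (CT1), (CT2), Regularity,
weak Triangle, (CC1) and (CC2). -/
structure IsPPIP (P : Type*) (le : P → P → Prop) (ic : P → P → Prop)
    (C : P → P → P → Prop) : Prop where
  le_refl : ∀ p, le p p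
  le_trans : ∀ p q r, le p q → le q r → le p r
  le_antisymm : ∀ p q, le p q → le q p → p = q
  ic_symm : ∀ p q, ic p q → ic q p
  c_symm_left : ∀ p q r, C p q r → C q p r
  c_symm_right : ∀ p q r, C p q r → C p r q
  ic1 : ∀ p q, ic p q → ¬ ∃ w, le p w ∧ le q w
  ic2 : ∀ p q p' q', ic p q → le p p' → le q q' → ic p' q'
  ct1 : ∀ p q r, C p q r →
    (¬ le p q ∧ ¬ le q p) ∧ (¬ le q r ∧ ¬ le r q) ∧ (¬ le r p ∧ ¬ le p r)
  ct2 : ∀ p q r w, C p q r → le p w → le q w → le r w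
  regularity : ∀ p q r r', C p q r → le r' r → ¬ le r' p → ¬ le r' q →
    ∃ p' q', le p' p ∧ le q' q ∧ C p' q' r'
  weak_triangle : ∀ a b c p q, C a c p → C b c q →
    (∀ u v, u ∈ ({a, b, c, p, q} : Set P) → v ∈ ({a, b, c, p, q} : Set P) → ¬ ic u v) →
    ((∃ x, C a b x ∧ C p q x ∧
        List.Pairwise (fun u v => ¬ le u v ∧ ¬ le v u) [a, b, c, p, q, x] ∧
        (∀ u v w, u ∈ ({a, b, c, p, q, x} : Set P) → v ∈ ({a, b, c, p, q, x} : Set P) →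
          w ∈ ({a, b, c, p, q, x} : Set P) → C u v w →
          ({u, v, w} : Multiset P) = {a, c, p} ∨ ({u, v, w} : Multiset P) = {b, c, q} ∨
          ({u, v, w} : Multiset P) = {a, b, x} ∨ ({u, v, w} : Multiset P) = {p, q, x})) ∨
      (∃ a', le a' a ∧ C b q a') ∨
      C b q p ∨
      (∃ a' p', le a' a ∧ le p' p ∧ C q a' p') ∨
      (le q a ∨ le q p))
  cc1 : ∀ p q r, C p q r → ¬ ic p q ∧ ¬ ic q r ∧ ¬ ic r p
  cc2 : ∀ p q r x, C p q r →
    ((ic x p ∧ ic x q) ∨ (ic x q ∧ ic x r) ∨ (ic x p ∧ ic x r)) ∨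
    (¬ ic x p ∧ ¬ ic x q ∧ ¬ ic x r)
/-- A consistent subspace: a downward-closed subset, no two of whose elements are
inconsistent, that is closed under the collinearity relation. -/
def IsCSub {P : Type*} (le : P → P → Prop) (ic : P → P → Prop)
    (C : P → P → P → Prop) (X : Set P) : Prop :=
  (∀ p q, le p q → q ∈ X → p ∈ X) ∧
  (∀ p q, p ∈ X → q ∈ X → ¬ ic p q) ∧
  (∀ p q r, p ∈ X → q ∈ X → C p q r → r ∈ X)
theorem IsCSub.inter {P : Type*} {le ic : P → P → Prop} {C : P → P → P → Prop}
    {X Y : Set P} (hX : IsCSub le ic C X) (hY : IsCSub le ic C Y) :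
    IsCSub le ic C (X ∩ Y) :=
  ⟨fun p q h hq => ⟨hX.1 p q h hq.1, hY.1 p q h hq.2⟩,
   fun p q hp hq => hX.2.1 p q hp.1 hq.1,
   fun p q r hp hq hc => ⟨hX.2.2 p q r hp.1 hq.1 hc, hY.2.2 p q r hp.2 hq.2 hc⟩⟩

/-- The family of consistent subspaces, ordered by inclusion, with meet given by
set intersection. -/
instance CsubSemilatticeInf {P : Type*} (le ic : P → P → Prop) (C : P → P → P → Prop) :
    SemilatticeInf {X : Set P // IsCSub le ic C X} :=
  { (inferInstance : PartialOrder {X : Set P // IsCSub le ic C X}) with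
    inf := fun A B => ⟨A.1 ∩ B.1, A.2.inter B.2⟩
    inf_le_left := by
      intro A B
      exact Set.inter_subset_left
    inf_le_right := by
      intro A B
      exact Set.inter_subset_right
    le_inf := by
      intro A B D h1 h2
      exact Set.subset_inter h1 h2 }

/-!
A set `A` of pairwise consistent points lies in a consistent subspace, namely its bipolar for the
relation of being consistent. Inside a consistent subspace the weak Triangle axiom makes the
projective-geometry argument work: the union of the lines joining a point of `X` to a point of `Y`
is again a subspace, hence it is `X ∨ Y`. So `I_p ∨ I_q` exists exactly when `p` and `q` are
consistent, and a point `r` of it that is below neither `p` nor `q` satisfies `C(x,y,r)` for some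
`x ≤ p` and `y ≤ q`. If moreover `p` lies in `I_q ∨ I_r`, it lies in `I_x ∨ I_q`, and the same
description of that join, together with (CT1), forces `x = p` unless `p ≤ q`. Finally, an element
is ∨-irreducible as soon as there is a greatest element strictly below it, which for `I_p` is
`I_p \ {p}`, and the converse holds when lower covers exist.
-/

section JoinIrred

theorem isLUB_pair_of_covBy {α : Type*} [SemilatticeInf α] {m l y : α} (hml : m ⋖ l)
    (hyl : y ≤ l) (hym : ¬ y ≤ m) : IsLUB {m, y} l := by
  refine ⟨by simp [upperBounds_insert, hml.le, hyl], fun u hu => ?_⟩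
  have hmu : m ≤ u := hu (by simp)
  have hyu : y ≤ u := hu (by simp)
  rcases hml.eq_or_eq (le_inf hmu hml.le) inf_le_right with heq | heq
  · exact absurd (heq ▸ le_inf hyu hyl) hym
  · exact inf_eq_right.1 heq

theorem joinIrred_of_isGreatest_Iio {α : Type*} [PartialOrder α] {m l : α}
    (hm : IsGreatest (Set.Iio l) m) : JoinIrred l := by
  refine ⟨fun hbot => (hbot m).not_gt hm.1, fun a b hab => ?_⟩
  by_contra! hne
  have ham : a ≤ m := hm.2 ((hab.1 (by simp)).lt_of_ne' hne.1)
  have hbm : b ≤ m := hm.2 ((hab.1 (by simp)).lt_of_ne' hne.2)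
  have hlm : l ≤ m := hab.2 (by simp [upperBounds_insert, ham, hbm])
  exact hlm.not_gt hm.1

theorem JoinIrred.exists_isGreatest_Iio {α : Type*} [SemilatticeInf α] [IsStronglyCoatomic α]
    {l : α} (hl : JoinIrred l) : ∃ m, IsGreatest (Set.Iio l) m := by
  obtain ⟨x, hlx⟩ := not_forall.1 hl.1
  obtain ⟨m, -, hml⟩ := exists_le_covBy_of_lt (inf_lt_right.2 hlx : x ⊓ l < l)
  refine ⟨m, hml.lt, fun y hyl => ?_⟩
  by_contra hym
  rcases hl.2 m y (isLUB_pair_of_covBy hml (le_of_lt hyl) hym) with heq | heq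
  · exact hml.lt.ne' heq
  · exact (ne_of_gt hyl) heq

end JoinIrred

/-- `Csub(P)`, the consistent subspaces of `P`. It is an abbreviation so that the semilattice
structure of the subtype is found by instance search. -/
abbrev Csub {P : Type*} (le ic : P → P → Prop) (C : P → P → P → Prop) : Type _ :=
  {X : Set P // IsCSub le ic C X}

section PPIP

variable {P : Type*} {le ic : P → P → Prop} {C : P → P → P → Prop}

namespace Csub

theorem mem_of_le (X : Csub le ic C) {p q : P} (hpq : le p q) (hq : q ∈ X.1) : p ∈ X.1 :=
  X.2.1 p q hpq hq

theorem not_ic (X : Csub le ic C) {p q : P} (hp : p ∈ X.1) (hq : q ∈ X.1) : ¬ ic p q :=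
  X.2.2.1 p q hp hq

theorem mem_of_collinear (X : Csub le ic C) {p q r : P} (hC : C p q r) (hp : p ∈ X.1)
    (hq : q ∈ X.1) : r ∈ X.1 :=
  X.2.2.2 p q r hp hq hC

end Csub

/-- The join of two subspaces in projective geometry: the points of `X`, of `Y`, and of the lines
joining them. -/
def lineHull (C : P → P → P → Prop) (X Y : Set P) : Set P :=
  X ∪ Y ∪ {r | ∃ x ∈ X, ∃ y ∈ Y, C x y r}

section LineHull

variable {X Y : Set P}

theorem subset_lineHull_left : X ⊆ lineHull C X Y :=
  fun _ hx => .inl (.inl hx)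

theorem subset_lineHull_right : Y ⊆ lineHull C X Y :=
  fun _ hy => .inl (.inr hy)

theorem mem_lineHull_of_collinear {x y r : P} (hC : C x y r) (hx : x ∈ X) (hy : y ∈ Y) :
    r ∈ lineHull C X Y :=
  .inr ⟨x, hx, y, hy, hC⟩

theorem lineHull_subset {Z : Csub le ic C} (hXZ : X ⊆ Z.1) (hYZ : Y ⊆ Z.1) :
    lineHull C X Y ⊆ Z.1 := by
  rintro r ((hr | hr) | ⟨x, hx, y, hy, hC⟩)
  · exact hXZ hr
  · exact hYZ hr
  · exact Z.mem_of_collinear hC (hXZ hx) (hYZ hy)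

end LineHull

namespace IsPPIP

section Collinearity

theorem c_rotate (h : IsPPIP P le ic C) {p q r : P} (hC : C p q r) : C q r p :=
  h.c_symm_right _ _ _ (h.c_symm_left _ _ _ hC)

theorem c_rotate' (h : IsPPIP P le ic C) {p q r : P} (hC : C p q r) : C r p q :=
  h.c_rotate (h.c_rotate hC)

theorem lineHull_comm (h : IsPPIP P le ic C) (X Y : Set P) :
    lineHull C X Y = lineHull C Y X := by
  have hsub : ∀ X Y : Set P, lineHull C X Y ⊆ lineHull C Y X := by
    rintro X Y r ((hr | hr) | ⟨x, hx, y, hy, hC⟩)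
    · exact subset_lineHull_right hr
    · exact subset_lineHull_left hr
    · exact mem_lineHull_of_collinear (h.c_symm_left _ _ _ hC) hy hx
  exact (hsub X Y).antisymm (hsub Y X)

end Collinearity

section Consistency

theorem mem_lowerPolar_of_le (h : IsPPIP P le ic C) {S : Set P} {p q : P} (hpq : le p q)
    (hq : q ∈ lowerPolar (fun a b => ¬ ic a b) S) : p ∈ lowerPolar (fun a b => ¬ ic a b) S :=
  fun s hs hps => hq hs (h.ic2 p s q s hps hpq (h.le_refl s))

theorem mem_lowerPolar_of_collinear (h : IsPPIP P le ic C) {S : Set P} {p q r : P}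
    (hC : C p q r) (hp : p ∈ lowerPolar (fun a b => ¬ ic a b) S)
    (hq : q ∈ lowerPolar (fun a b => ¬ ic a b) S) : r ∈ lowerPolar (fun a b => ¬ ic a b) S := by
  intro s hs hrs
  have hsp : ¬ ic s p := fun hsp => hp hs (h.ic_symm _ _ hsp)
  have hsq : ¬ ic s q := fun hsq => hq hs (h.ic_symm _ _ hsq)
  have hsr : ic s r := h.ic_symm _ _ hrs
  have hcc2 := h.cc2 p q r s hC
  tauto

theorem exists_csub_superset (h : IsPPIP P le ic C) {A : Set P}
    (hA : ∀ a ∈ A, ∀ b ∈ A, ¬ ic a b) : ∃ Z : Csub le ic C, A ⊆ Z.1 := by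
  set bipolar := lowerPolar (fun a b => ¬ ic a b) (upperPolar (fun a b => ¬ ic a b) A)
  have hsub : bipolar ⊆ upperPolar (fun a b => ¬ ic a b) A := fun z hz a ha haz =>
    hz (fun b hb => hA b hb a ha) (h.ic_symm _ _ haz)
  exact ⟨⟨bipolar, fun _ _ => h.mem_lowerPolar_of_le, fun p q hp hq => hp (hsub hq),
    fun _ _ _ hp hq hC => h.mem_lowerPolar_of_collinear hC hp hq⟩,
    subset_lowerPolar_upperPolar _ A⟩

end Consistency

section Projectivity

variable {X Y Z : Csub le ic C}

theorem mem_lineHull_of_le (h : IsPPIP P le ic C) {r' r : P} (hr' : le r' r)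
    (hr : r ∈ lineHull C X.1 Y.1) : r' ∈ lineHull C X.1 Y.1 := by
  rcases hr with (hr | hr) | ⟨x, hx, y, hy, hC⟩
  · exact subset_lineHull_left (X.mem_of_le hr' hr)
  · exact subset_lineHull_right (Y.mem_of_le hr' hr)
  by_cases hrx : le r' x
  · exact subset_lineHull_left (X.mem_of_le hrx hx)
  by_cases hry : le r' y
  · exact subset_lineHull_right (Y.mem_of_le hry hy)
  obtain ⟨x', y', hx', hy', hC'⟩ := h.regularity x y r r' hC hr' hrx hry
  exact mem_lineHull_of_collinear hC' (X.mem_of_le hx' hx) (Y.mem_of_le hy' hy)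

/-- The weak Triangle axiom for two lines `xyc` and `bcw` meeting in `c`. In the last alternative
the lines `xb` and `yw` meet as well, in `z`. -/
theorem mem_lineHull_or_exists_collinear (h : IsPPIP P le ic C) (hXZ : X ≤ Z) (hYZ : Y ≤ Z)
    {x y c b w : P} (hx : x ∈ X.1) (hy : y ∈ Y.1) (hb : b ∈ Z.1) (hxyc : C x y c)
    (hbcw : C b c w) :
    w ∈ lineHull C X.1 Y.1 ∨ (∃ t ∈ X.1 ∪ Y.1, C t b w) ∨ ∃ z, C x b z ∧ C y z w := by
  have hc : c ∈ Z.1 := Z.mem_of_collinear hxyc (hXZ hx) (hYZ hy)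
  have hw : w ∈ Z.1 := Z.mem_of_collinear hbcw hb hc
  have hsub : ({x, b, c, y, w} : Set P) ⊆ Z.1 := by
    rintro u (rfl | rfl | rfl | rfl | rfl)
    exacts [hXZ hx, hb, hc, hYZ hy, hw]
  rcases h.weak_triangle x b c y w (h.c_symm_right _ _ _ hxyc) hbcw
    (fun u v hu hv => Z.not_ic (hsub hu) (hsub hv)) with
    ⟨z, hxbz, hywz, -⟩ | ⟨x', hx', hC⟩ | hC | ⟨x', y', hx', hy', hC⟩ | hwx | hwy
  · exact .inr (.inr ⟨z, hxbz, h.c_symm_right _ _ _ hywz⟩)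
  · exact .inr (.inl ⟨x', .inl (X.mem_of_le hx' hx), h.c_rotate' hC⟩)
  · exact .inr (.inl ⟨y, .inr hy, h.c_rotate' hC⟩)
  · exact .inl (mem_lineHull_of_collinear (h.c_rotate hC) (X.mem_of_le hx' hx)
      (Y.mem_of_le hy' hy))
  · exact .inl (subset_lineHull_left (X.mem_of_le hwx hx))
  · exact .inl (subset_lineHull_right (Y.mem_of_le hwy hy))

theorem mem_lineHull_of_collinear_left (h : IsPPIP P le ic C) (hXZ : X ≤ Z) (hYZ : Y ≤ Z)
    {u v w : P} (hC : C u v w) (hu : u ∈ X.1) (hv : v ∈ lineHull C X.1 Y.1) :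
    w ∈ lineHull C X.1 Y.1 := by
  rcases hv with (hv | hv) | ⟨x, hx, y, hy, hxyv⟩
  · exact subset_lineHull_left (X.mem_of_collinear hC hu hv)
  · exact mem_lineHull_of_collinear hC hu hv
  rcases h.mem_lineHull_or_exists_collinear hXZ hYZ hx hy (hXZ hu) hxyv hC with
    hw | ⟨t, ht | ht, htuw⟩ | ⟨z, hxuz, hyzw⟩
  · exact hw
  · exact subset_lineHull_left (X.mem_of_collinear htuw ht hu)
  · exact mem_lineHull_of_collinear (h.c_symm_left _ _ _ htuw) hu ht
  · exact mem_lineHull_of_collinear (h.c_symm_left _ _ _ hyzw)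
      (X.mem_of_collinear hxuz hx hu) hy

theorem mem_lineHull_of_collinear_right (h : IsPPIP P le ic C) (hXZ : X ≤ Z) (hYZ : Y ≤ Z)
    {u v w : P} (hC : C u v w) (hu : u ∈ Y.1) (hv : v ∈ lineHull C X.1 Y.1) :
    w ∈ lineHull C X.1 Y.1 := by
  rw [h.lineHull_comm] at hv ⊢
  exact h.mem_lineHull_of_collinear_left hYZ hXZ hC hu hv

theorem mem_lineHull_of_collinear_of_mem (h : IsPPIP P le ic C) (hXZ : X ≤ Z) (hYZ : Y ≤ Z)
    {u v w : P} (hC : C u v w) (hu : u ∈ lineHull C X.1 Y.1) (hv : v ∈ lineHull C X.1 Y.1) :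
    w ∈ lineHull C X.1 Y.1 := by
  rcases hu with (hu | hu) | ⟨x, hx, y, hy, hxyu⟩
  · exact h.mem_lineHull_of_collinear_left hXZ hYZ hC hu hv
  · exact h.mem_lineHull_of_collinear_right hXZ hYZ hC hu hv
  rcases h.mem_lineHull_or_exists_collinear hXZ hYZ hx hy (lineHull_subset hXZ hYZ hv) hxyu
    (h.c_symm_left _ _ _ hC) with hw | ⟨t, ht | ht, htvw⟩ | ⟨z, hxvz, hyzw⟩
  · exact hw
  · exact h.mem_lineHull_of_collinear_left hXZ hYZ htvw ht hv
  · exact h.mem_lineHull_of_collinear_right hXZ hYZ htvw ht hv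
  · have hz := h.mem_lineHull_of_collinear_left hXZ hYZ hxvz hx hv
    exact h.mem_lineHull_of_collinear_right hXZ hYZ hyzw hy hz

theorem isCSub_lineHull (h : IsPPIP P le ic C) (hXZ : X ≤ Z) (hYZ : Y ≤ Z) :
    IsCSub le ic C (lineHull C X.1 Y.1) :=
  have hsub := lineHull_subset hXZ hYZ
  ⟨fun _ _ => h.mem_lineHull_of_le, fun _ _ hp hq => Z.not_ic (hsub hp) (hsub hq),
    fun _ _ _ hp hq hC => h.mem_lineHull_of_collinear_of_mem hXZ hYZ hC hp hq⟩

theorem isLUB_lineHull (h : IsPPIP P le ic C) (hXZ : X ≤ Z) (hYZ : Y ≤ Z) :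
    IsLUB {X, Y} (⟨lineHull C X.1 Y.1, h.isCSub_lineHull hXZ hYZ⟩ : Csub le ic C) := by
  refine ⟨?_, fun U hU => lineHull_subset (hU (by simp) : X ≤ U) (hU (by simp) : Y ≤ U)⟩
  rintro _ (rfl | rfl)
  exacts [subset_lineHull_left, subset_lineHull_right]

theorem joinExists_iff_forall_not_ic (h : IsPPIP P le ic C) :
    JoinExists X Y ↔ ∀ x ∈ X.1, ∀ y ∈ Y.1, ¬ ic x y := by
  constructor
  · rintro ⟨J, hJ⟩ x hx y hy
    have hXJ : X ≤ J := hJ.1 (by simp)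
    have hYJ : Y ≤ J := hJ.1 (by simp)
    exact J.not_ic (hXJ hx) (hYJ hy)
  · intro hXY
    have hunion : ∀ a ∈ X.1 ∪ Y.1, ∀ b ∈ X.1 ∪ Y.1, ¬ ic a b := by
      rintro a (ha | ha) b (hb | hb)
      · exact X.not_ic ha hb
      · exact hXY a ha b hb
      · exact fun hab => hXY b hb a ha (h.ic_symm _ _ hab)
      · exact Y.not_ic ha hb
    obtain ⟨Z, hZ⟩ := h.exists_csub_superset hunion
    have hXZ : X ≤ Z := Set.subset_union_left.trans hZ
    have hYZ : Y ≤ Z := Set.subset_union_right.trans hZ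
    exact ⟨_, h.isLUB_lineHull hXZ hYZ⟩

end Projectivity

section Principal

theorem isCSub_setOf_le (h : IsPPIP P le ic C) (p : P) : IsCSub le ic C {x | le x p} :=
  ⟨fun a b hab hb => h.le_trans a b p hab hb,
    fun a b ha hb hab => h.ic1 a b hab ⟨p, ha, hb⟩,
    fun a b r ha hb hC => h.ct2 a b r p hC ha hb⟩

/-- The principal ideal `I_p`, as an element of `Csub(P)`. -/
def principal (h : IsPPIP P le ic C) (p : P) : Csub le ic C :=
  ⟨{x | le x p}, h.isCSub_setOf_le p⟩

theorem principal_le_iff (h : IsPPIP P le ic C) {p : P} {X : Csub le ic C} :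
    h.principal p ≤ X ↔ p ∈ X.1 :=
  ⟨fun hle => hle (h.le_refl p), fun hp _ hx => X.mem_of_le hx hp⟩

theorem principal_le_principal (h : IsPPIP P le ic C) {p q : P} :
    h.principal p ≤ h.principal q ↔ le p q :=
  h.principal_le_iff

theorem principal_injective (h : IsPPIP P le ic C) : Function.Injective h.principal :=
  fun p q hpq => h.le_antisymm p q (h.principal_le_principal.1 hpq.le)
    (h.principal_le_principal.1 hpq.ge)

end Principal

section Irreducible

theorem isCSub_setOf_le_and_ne (h : IsPPIP P le ic C) (p : P) :
    IsCSub le ic C {x | le x p ∧ x ≠ p} := by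
  refine ⟨fun a b hab hb => ⟨h.le_trans a b p hab hb.1, ?_⟩,
    fun a b ha hb => (h.principal p).not_ic ha.1 hb.1,
    fun a b r ha hb hC => ⟨h.ct2 a b r p hC ha.1 hb.1, ?_⟩⟩
  · rintro rfl
    exact hb.2 (h.le_antisymm _ _ hb.1 hab)
  · rintro rfl
    exact (h.ct1 _ _ _ hC).2.1.1 hb.1

theorem isGreatest_Iio_principal (h : IsPPIP P le ic C) (p : P) :
    IsGreatest (Set.Iio (h.principal p))
      (⟨{x | le x p ∧ x ≠ p}, h.isCSub_setOf_le_and_ne p⟩ : Csub le ic C) := by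
  have hsub : {x | le x p ∧ x ≠ p} ⊆ (h.principal p).1 := fun _ hx => hx.1
  have hp : p ∉ {x | le x p ∧ x ≠ p} := fun hp => hp.2 rfl
  refine ⟨lt_of_le_not_ge hsub fun hle => hp (hle (h.le_refl p)), fun X hX x hx => ?_⟩
  have hXp : X ≤ h.principal p := le_of_lt hX
  refine ⟨hXp hx, ?_⟩
  rintro rfl
  exact not_le_of_gt hX (h.principal_le_iff.2 hx)

theorem joinIrred_principal (h : IsPPIP P le ic C) (p : P) : JoinIrred (h.principal p) :=
  joinIrred_of_isGreatest_Iio (h.isGreatest_Iio_principal p)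

theorem exists_principal_eq [IsStronglyCoatomic (Csub le ic C)] (h : IsPPIP P le ic C)
    {X : Csub le ic C} (hX : JoinIrred X) : ∃ p, h.principal p = X := by
  obtain ⟨M, hMX, hM⟩ := hX.exists_isGreatest_Iio
  obtain ⟨p, hpX, hpM⟩ := Set.not_subset.1 (not_le_of_gt hMX)
  refine ⟨p, (h.principal_le_iff.2 hpX).eq_of_not_lt fun hlt => hpM ?_⟩
  exact h.principal_le_iff.1 (hM hlt)

theorem range_principal [IsStronglyCoatomic (Csub le ic C)] (h : IsPPIP P le ic C) :
    Set.range h.principal = {X | JoinIrred X} :=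
  Set.Subset.antisymm (Set.range_subset_iff.2 h.joinIrred_principal)
    fun _ hX => h.exists_principal_eq hX

end Irreducible

section Joins

variable {J : Csub le ic C} {p q r : P}

theorem ic_iff_not_joinExists (h : IsPPIP P le ic C) (p q : P) :
    ic p q ↔ ¬ JoinExists (h.principal p) (h.principal q) := by
  rw [h.joinExists_iff_forall_not_ic, iff_not_comm]
  exact ⟨fun hall => hall p (h.le_refl p) q (h.le_refl q),
    fun hpq x hx y hy hxy => hpq (h.ic2 x y p q hxy hx hy)⟩

theorem isLUB_principal_pair_iff (h : IsPPIP P le ic C) :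
    IsLUB {h.principal p, h.principal q} J ↔
      p ∈ J.1 ∧ q ∈ J.1 ∧ ∀ U : Csub le ic C, p ∈ U.1 → q ∈ U.1 → J ≤ U := by
  simp only [IsLUB, IsLeast, mem_lowerBounds, upperBounds_insert, upperBounds_singleton,
    Set.mem_inter_iff, Set.mem_Ici, h.principal_le_iff, and_assoc, and_imp]

theorem isLUB_principal_rotate (h : IsPPIP P le ic C) (hC : C p q r)
    (hJ : IsLUB {h.principal p, h.principal q} J) :
    IsLUB {h.principal q, h.principal r} J := by
  rw [h.isLUB_principal_pair_iff] at hJ ⊢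
  obtain ⟨hp, hq, hmin⟩ := hJ
  exact ⟨hq, J.mem_of_collinear hC hp hq,
    fun U hqU hrU => hmin U (U.mem_of_collinear (h.c_rotate hC) hqU hrU) hqU⟩

theorem collinear3_principal_of_c (h : IsPPIP P le ic C) (hC : C p q r) :
    Collinear3 (h.principal p) (h.principal q) (h.principal r) := by
  simp only [Collinear3, Incomp, h.principal_le_principal]
  obtain ⟨hpq, hqr, hrp⟩ := h.ct1 p q r hC
  obtain ⟨J, hJ⟩ := not_not.1 (mt (h.ic_iff_not_joinExists p q).2 (h.cc1 p q r hC).1)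
  have hJ' := h.isLUB_principal_rotate hC hJ
  exact ⟨hpq, hqr, hrp, J, hJ, hJ', h.isLUB_principal_rotate (h.c_rotate hC) hJ'⟩

theorem exists_c_of_isLUB_principal (h : IsPPIP P le ic C)
    (hJ : IsLUB {h.principal p, h.principal q} J) (hr : r ∈ J.1)
    (hrp : ¬ le r p) (hrq : ¬ le r q) : ∃ x y, le x p ∧ le y q ∧ C x y r := by
  have hpJ : h.principal p ≤ J := hJ.1 (by simp)
  have hqJ : h.principal q ≤ J := hJ.1 (by simp)
  have hJ_le := (hJ.unique (h.isLUB_lineHull hpJ hqJ)).le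
  rcases hJ_le hr with (hr | hr) | ⟨x, hx, y, hy, hC⟩
  · exact absurd hr hrp
  · exact absurd hr hrq
  · exact ⟨x, y, hx, hy, hC⟩

theorem eq_of_c_of_isLUB_principal (h : IsPPIP P le ic C) {x y : P}
    (hJ : IsLUB {h.principal q, h.principal r} J) (hp : p ∈ J.1) (hpq : ¬ le p q)
    (hx : le x p) (hy : le y q) (hC : C x y r) : x = p := by
  have hxq : IsLUB {h.principal x, h.principal q} J := by
    rw [h.isLUB_principal_pair_iff] at hJ ⊢
    obtain ⟨hq, -, hmin⟩ := hJ
    exact ⟨J.mem_of_le hx hp, hq, fun U hxU hqU =>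
      hmin U hqU (U.mem_of_collinear hC hxU (U.mem_of_le hy hqU))⟩
  by_contra hne
  have hpx : ¬ le p x := fun hpx => hne (h.le_antisymm _ _ hx hpx)
  obtain ⟨x', y', hx', -, hx'y'p⟩ := h.exists_c_of_isLUB_principal hxq hp hpx hpq
  exact (h.ct1 x' y' p hx'y'p).2.2.2 (h.le_trans _ _ _ hx' hx)

theorem c_of_collinear3_principal (h : IsPPIP P le ic C)
    (hcol : Collinear3 (h.principal p) (h.principal q) (h.principal r)) : C p q r := by
  simp only [Collinear3, Incomp, h.principal_le_principal] at hcol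
  obtain ⟨⟨hpq, hqp⟩, ⟨-, hrq⟩, ⟨hrp, -⟩, J, hJpq, hJqr, hJrp⟩ := hcol
  obtain ⟨hp, hq, -⟩ := h.isLUB_principal_pair_iff.1 hJpq
  have hr : r ∈ J.1 := (h.isLUB_principal_pair_iff.1 hJqr).2.1
  obtain ⟨x, y, hx, hy, hC⟩ := h.exists_c_of_isLUB_principal hJpq hr hrp hrq
  obtain rfl : x = p := h.eq_of_c_of_isLUB_principal hJqr hp hpq hx hy hC
  rw [Set.pair_comm] at hJrp
  obtain rfl : y = q :=
    h.eq_of_c_of_isLUB_principal hJrp hq hqp hy hx (h.c_symm_left _ _ _ hC)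
  exact hC

end Joins

end IsPPIP

theorem stmt3_general [IsStronglyCoatomic (Csub le ic C)] (h : IsPPIP P le ic C) :
    Function.Injective h.principal ∧
      Set.range h.principal = {X | JoinIrred X} ∧
      (∀ p q, le p q ↔ h.principal p ≤ h.principal q) ∧
      (∀ p q, ic p q ↔ ¬ JoinExists (h.principal p) (h.principal q)) ∧
      (∀ p q r, C p q r ↔ Collinear3 (h.principal p) (h.principal q) (h.principal r)) :=
  ⟨h.principal_injective, h.range_principal, fun _ _ => h.principal_le_principal.symm,
    h.ic_iff_not_joinExists,
    fun _ _ _ => ⟨h.collinear3_principal_of_c, h.c_of_collinear3_principal⟩⟩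

end PPIP

/-- For a PPIP `P`, the map `p ↦ I_p` is a bijection from `P` onto the ∨-irreducible
elements of `Csub(P)`, preserving and reflecting the order, the inconsistency relation
and the collinearity relation. -/
theorem stmt3 (P : Type*) [Fintype P] (le ic : P → P → Prop) (C : P → P → P → Prop)
    (h : IsPPIP P le ic C) :
    ∃ hprin : ∀ p : P, IsCSub le ic C {x | le x p},
      Function.Injective
        (fun p : P => (⟨{x | le x p}, hprin p⟩ : {X : Set P // IsCSub le ic C X})) ∧
      Set.range
        (fun p : P => (⟨{x | le x p}, hprin p⟩ : {X : Set P // IsCSub le ic C X})) =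
        {X : {X : Set P // IsCSub le ic C X} | JoinIrred X} ∧
      (∀ p q : P, le p q ↔
        (⟨{x | le x p}, hprin p⟩ : {X : Set P // IsCSub le ic C X}) ≤
          ⟨{x | le x q}, hprin q⟩) ∧
      (∀ p q : P, ic p q ↔
        ¬ JoinExists (⟨{x | le x p}, hprin p⟩ : {X : Set P // IsCSub le ic C X})
          ⟨{x | le x q}, hprin q⟩) ∧
      (∀ p q r : P, C p q r ↔
        Collinear3 (⟨{x | le x p}, hprin p⟩ : {X : Set P // IsCSub le ic C X})
          ⟨{x | le x q}, hprin q⟩ ⟨{x | le x r}, hprin r⟩) := by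
  refine ⟨h.isCSub_setOf_le, ?_⟩
  exact stmt3_general h
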